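/- Let m ≡ 0 (mod 4), and let e be an integer with 2 ≤ e ≤ ⌊m/2⌋ and gcd(m,e) = 2. Then the supports of the codewords of Hamming weight 6 in the extended code C̄_E form a 2-(2^m, 6, λ) design with λ = (2^{2m−3} + 2^m + 12)/3: every 2-element subset of the 2^m coordinate positions is contained in the support of exactly (2^{2m−3} + 2^m + 12)/3 codewords of Hamming weight 6 of C̄_E. -/

import Mathlib

open Polynomial Finset

/-- The polynomial `c₀ + c₁x + ⋯ + c_{n−1}x^{n−1}` associated to a vector. -/
noncomputable def codePoly {n : ℕ} (c : Fin n → ZMod 2) : Polynomial (ZMod 2) :=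
  ∑ i : Fin n, Polynomial.C (c i) * Polynomial.X ^ (i : ℕ)

/-- The generator polynomial `g_E(x) = M_α(x) · M_{α^{1+2^e}}(x)`. -/
noncomputable def gE (m e : ℕ) (α : GaloisField 2 m) : Polynomial (ZMod 2) :=
  minpoly (ZMod 2) α * minpoly (ZMod 2) (α ^ (1 + 2 ^ e))

/-- The binary cyclic code `C_E` of length `2^m − 1` with generator polynomial `g_E`. -/
def CE (m e : ℕ) (α : GaloisField 2 m) : Set (Fin (2 ^ m - 1) → ZMod 2) :=
  {c | gE m e α ∣ codePoly c}

/-- The extended code `C̄_E ⊆ F_2^{2^m}`: the first `2^m − 1` coordinates form a codeword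
of `C_E` and all `2^m` coordinates sum to zero. -/
def CEbar (m e : ℕ) (α : GaloisField 2 m) : Set (Fin (2 ^ m) → ZMod 2) :=
  {c | (fun i : Fin (2 ^ m - 1) => c (Fin.castLE (Nat.sub_le _ _) i)) ∈ CE m e α ∧
       ∑ i, c i = 0}

section cnt
set_option linter.unusedSectionVars false
variable {F : Type*} [Field F] [Fintype F] [DecidableEq F] [CharP F 2]

/-- The alternating form. -/
def BB (σ : F →+* F) (x y : F) : F := x * σ y + y * σ x

def Ind2 (w u : F) : Prop := w ≠ 0 ∧ w ≠ 1 ∧ u ≠ 0 ∧ u ≠ 1 ∧ u ≠ w ∧ u ≠ w + 1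

instance (w u : F) : Decidable (Ind2 w u) := by unfold Ind2; infer_instance

def spn (w u : F) : Finset F := {0, 1, w, w+1, u, u+1, w+u, w+u+1}

theorem two0 : (2:F) = 0 := CharTwo.two_eq_zero

theorem cnt_v (σ : F →+* F) (h4 : #{x : F | σ x = x} = 4) (b v0 : F) (hb : BB σ 1 v0 = b) :
    #{v : F | BB σ 1 v = b} = 4 := by
  rw [← h4]
  refine Finset.card_bij' (fun v _ => v + v0) (fun v _ => v + v0) ?_ ?_ ?_ ?_
  · intro v hv
    have h2 : (2:F) = 0 := two0
    simp only [mem_filter, mem_univ, true_and, BB, map_one, map_add] at *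
    grind
  · intro v hv
    have h2 : (2:F) = 0 := two0
    simp only [mem_filter, mem_univ, true_and, BB, map_one, map_add] at *
    grind
  · intro v hv; have h2 : (2:F) = 0 := two0; grind
  · intro v hv; have h2 : (2:F) = 0 := two0; grind

theorem cnt_total (σ : F →+* F) (h4 : #{x : F | σ x = x} = 4)
    (h16 : #{x : F | σ (σ x) = x} = 16) :
    ∑ p : F × F, #{v : F | BB σ 1 v = BB σ p.1 p.2} + 16 * Fintype.card F = 
      Fintype.card F ^ 2 + 64 * Fintype.card F := by
  have h2 : (2:F) = 0 := two0
  have hbij : Function.Bijective σ := Finite.injective_iff_bijective.mp σ.injective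
  have key : ∀ u : F, ∑ w : F, #{v : F | BB σ 1 v = BB σ w u} =
      if σ (σ u) = u then 4 * Fintype.card F else Fintype.card F := by
    intro u
    have e1 : ∀ w : F, #{v : F | BB σ 1 v = BB σ w u} = 
        #{v : F | σ w * (u + σ (σ u)) = v + σ v} := by
      intro w
      refine Finset.card_bij' (fun v _ => v + w * σ u) (fun v _ => v + w * σ u) ?_ ?_ ?_ ?_
      · intro v hv
        simp only [mem_filter, mem_univ, true_and, BB, map_one, map_add, map_mul] at *
        grind
      · intro v hv
        simp only [mem_filter, mem_univ, true_and, BB, map_one, map_add, map_mul] at *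
        grind
      · intro v hv; grind
      · intro v hv; grind
    simp_rw [e1]
    split_ifs with h
    · have : ∀ w : F, #{v : F | σ w * (u + σ (σ u)) = v + σ v} = 4 := by
        intro w
        rw [← h4, h]
        congr 1
        ext v
        simp only [mem_filter, mem_univ, true_and]
        grind
      simp [this, mul_comm]
    · simp_rw [Finset.card_filter]
      rw [Finset.sum_comm]
      have : ∀ v : F, (∑ w : F, if σ w * (u + σ (σ u)) = v + σ v then 1 else 0) = 1 := by
        intro v
        have hk : u + σ (σ u) ≠ 0 := by grind
        obtain ⟨w0, hw0⟩ := hbij.2 ((v + σ v) / (u + σ (σ u)))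
        rw [Finset.sum_eq_single w0]
        · rw [hw0]; simp [hk]
        · intro b _ hb
          rw [if_neg]
          intro h'
          apply hb
          apply hbij.1
          rw [hw0]; field_simp; exact h'
        · simp
      simp [this]
  rw [Fintype.sum_prod_type_right]
  simp_rw [key]
  rw [Finset.sum_ite]
  simp only [sum_const, smul_eq_mul, h16]
  have := Finset.card_filter_add_card_filter_not (s := (univ : Finset F)) (fun x => σ (σ x) = x)
  rw [h16, card_univ] at this
  nlinarith

theorem cnt_Ind2 (hF : 4 ≤ Fintype.card F) : #{p : F × F | ¬ Ind2 p.1 p.2} + 8 = 6 * Fintype.card F := by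
  have h2 : (2:F) = 0 := two0
  have h1 : ∑ w : F, #{u : F | Ind2 w u} = (Fintype.card F - 2) * (Fintype.card F - 4) := by
    have : ∀ w : F, #{u : F | Ind2 w u} = if w ∈ ({0, 1} : Finset F) then 0 else Fintype.card F - 4 := by
      intro w
      split_ifs with h
      · rw [Finset.card_eq_zero]
        ext u
        simp [Ind2] at *
        grind
      · have : ({u : F | Ind2 w u} : Finset F) = ({0, 1, w, w+1} : Finset F)ᶜ := by
          ext u
          simp [Ind2] at *
          grind
        rw [this, card_compl]
        congr 1
        simp at h
        rw [card_insert_of_notMem, card_insert_of_notMem, card_insert_of_notMem, card_singleton]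
        all_goals simp
        all_goals grind
    simp_rw [this]
    rw [Finset.sum_ite]
    simp only [sum_const, smul_eq_mul, mul_zero, zero_add]
    congr 1
    have : ({x : F | x ∉ ({0, 1} : Finset F)} : Finset F) = ({0,1} : Finset F)ᶜ := by
      ext; simp
    rw [this, card_compl]
    congr 1
    rw [card_pair]; exact zero_ne_one
  have h3 : #{p : F × F | Ind2 p.1 p.2} = (Fintype.card F - 2) * (Fintype.card F - 4) := by
    rw [← h1, Finset.card_filter, Fintype.sum_prod_type]
    simp_rw [Finset.card_filter]
  have := Finset.card_filter_add_card_filter_not (s := (univ : Finset (F × F))) (fun p => Ind2 p.1 p.2)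
  rw [h3, card_univ, Fintype.card_prod] at this
  obtain ⟨k, hk⟩ := Nat.exists_eq_add_of_le hF
  rw [hk] at this ⊢
  have a1 : 4 + k - 2 = k + 2 := by omega
  have a2 : 4 + k - 4 = k := by omega
  rw [a1, a2] at this
  nlinarith

theorem cnt_B0 (σ : F →+* F) (h4 : #{x : F | σ x = x} = 4) :
    #{p : F × F | Ind2 p.1 p.2 ∧ BB σ p.1 p.2 = 0} + 8 = 2 * Fintype.card F := by
  have h2 : (2:F) = 0 := two0
  have e : #{p : F × F | Ind2 p.1 p.2 ∧ BB σ p.1 p.2 = 0} = 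
      #(({w : F | ¬ σ w = w} : Finset F) ×ˢ (({x : F | σ x = x} : Finset F) \ {0,1})) := by
    symm
    refine Finset.card_bij' (fun p _ => (p.1, p.1 * p.2)) (fun p _ => (p.1, p.2 / p.1)) ?_ ?_ ?_ ?_
    · rintro ⟨w, t⟩ h
      simp only [mem_product, mem_filter, mem_univ, true_and, mem_sdiff, mem_insert, mem_singleton, not_or] at *
      simp only [Ind2, BB, map_mul] at *
      obtain ⟨hw, ht, ht0, ht1⟩ := h
      have hw0 : w ≠ 0 := by rintro rfl; simp at hw
      have hw1 : w ≠ 1 := by rintro rfl; simp at hw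
      refine ⟨⟨hw0, hw1, by positivity, ?_, ?_, ?_⟩, ?_⟩
      · intro h
        apply hw
        have : w = t⁻¹ := eq_inv_of_mul_eq_one_left h
        rw [this, map_inv₀, ht]
      · intro h; apply ht1; exact mul_left_cancel₀ hw0 (by rw [h, mul_one])
      · intro h
        apply hw
        have : w = (t+1)⁻¹ := eq_inv_of_mul_eq_one_left (by grind)
        rw [this, map_inv₀, map_add, ht, map_one]
      · rw [ht]; grind
    · rintro ⟨w, u⟩ h
      simp only [mem_product, mem_filter, mem_univ, true_and, mem_sdiff, mem_insert, mem_singleton, not_or] at *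
      simp only [Ind2, BB] at *
      obtain ⟨⟨hw0, hw1, hu0, hu1, huw, huw1⟩, hB⟩ := h
      have hsw : σ w ≠ 0 := by simpa using hw0
      have ht : σ (u / w) = u / w := by
        rw [map_div₀]; field_simp; grind
      refine ⟨?_, ht, ?_, ?_⟩
      · intro hw
        -- {0,1,w,w+1} ∪ {u} would be five fixed points
        have hu : σ u = u := by
          rw [map_div₀, hw] at ht
          field_simp at ht; exact ht
        have : ({0, 1, w, w+1, u} : Finset F) ⊆ ({x : F | σ x = x} : Finset F) := by
          intro x hx
          simp at hx ⊢
          rcases hx with rfl | rfl | rfl | rfl | rfl <;> simp [*]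
        have := card_le_card this
        rw [h4, card_insert_of_notMem, card_insert_of_notMem, card_insert_of_notMem,
          card_insert_of_notMem, card_singleton] at this
        · omega
        all_goals simp
        all_goals grind
      · positivity
      · rw [div_eq_one_iff_eq hw0]; exact huw
    · rintro ⟨w, t⟩ h
      simp only [mem_product, mem_filter, mem_univ, true_and] at *
      have hw0 : w ≠ 0 := by rintro rfl; simp at h
      simp [hw0]
    · rintro ⟨w, t⟩ h
      simp only [mem_filter, mem_univ, true_and] at *
      simp only [Ind2] at *
      have hw0 : w ≠ 0 := h.1.1
      simp; field_simp
  rw [e, card_product, card_sdiff_of_subset, h4, card_pair zero_ne_one]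
  · have := Finset.card_filter_add_card_filter_not (s := (univ : Finset F)) (fun x => σ x = x)
    rw [h4, card_univ] at this
    omega
  · intro x; simp; rintro (rfl | rfl) <;> simp

theorem cnt_B (σ : F →+* F) (h4 : #{x : F | σ x = x} = 4) (i j : F)
    (hi : i = 0 ∨ i = 1) (hj : j = 0 ∨ j = 1) :
    #{p : F × F | Ind2 p.1 p.2 ∧ BB σ (p.1 + i) (p.2 + j) = 0} + 8 = 2 * Fintype.card F := by
  have h2 : (2:F) = 0 := two0
  rw [← cnt_B0 σ h4]
  congr 1
  refine Finset.card_bij' (fun p _ => (p.1 + i, p.2 + j)) (fun p _ => (p.1 + i, p.2 + j)) ?_ ?_ ?_ ?_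
  · rintro ⟨w, u⟩ h
    simp only [mem_filter, mem_univ, true_and] at *
    refine ⟨?_, h.2⟩
    have := h.1
    simp only [Ind2] at *
    grind
  · rintro ⟨w, u⟩ h
    simp only [mem_filter, mem_univ, true_and] at *
    constructor
    · have := h.1
      simp only [Ind2] at *
      grind
    · have e1 : w + i + i = w := by grind
      have e2 : u + j + j = u := by grind
      rw [e1, e2]; exact h.2
  · rintro ⟨w, u⟩ h
    simp only [Prod.mk.injEq]; grind
  · rintro ⟨w, u⟩ h
    simp only [Prod.mk.injEq]; grind

theorem spn_fiber (σ : F →+* F) (w u : F) (h : Ind2 w u) :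
    #{v : F | BB σ 1 v = BB σ w u ∧ v ∈ spn w u} =
      2 * ((if BB σ (w + 0) (u + 0) = 0 then 1 else 0) + (if BB σ (w + 0) (u + 1) = 0 then 1 else 0)
       + (if BB σ (w + 1) (u + 0) = 0 then 1 else 0) + (if BB σ (w + 1) (u + 1) = 0 then 1 else 0)) := by
  have h2 : (2:F) = 0 := two0
  have e : ({v : F | BB σ 1 v = BB σ w u ∧ v ∈ spn w u} : Finset F) =
      (spn w u).filter (fun v => BB σ 1 v = BB σ w u) := by
    ext v; simp [and_comm]
  simp only [Ind2] at h
  have z : ∀ x y : F, x = y ↔ x + y = 0 := by intro x y; grind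
  have a0 : (BB σ 1 0 = BB σ w u) = (BB σ (w + 0) (u + 0) = 0) := by
    simp only [BB, map_add, map_one, map_zero, eq_iff_iff]; grind
  have a1 : (BB σ 1 1 = BB σ w u) = (BB σ (w + 0) (u + 0) = 0) := by
    simp only [BB, map_add, map_one, map_zero, eq_iff_iff]; grind
  have a2 : (BB σ 1 w = BB σ w u) = (BB σ (w + 0) (u + 1) = 0) := by
    simp only [BB, map_add, map_one, map_zero, eq_iff_iff]; grind
  have a3 : (BB σ 1 (w+1) = BB σ w u) = (BB σ (w + 0) (u + 1) = 0) := by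
    simp only [BB, map_add, map_one, map_zero, eq_iff_iff]; grind
  have a4 : (BB σ 1 u = BB σ w u) = (BB σ (w + 1) (u + 0) = 0) := by
    simp only [BB, map_add, map_one, map_zero, eq_iff_iff]; grind
  have a5 : (BB σ 1 (u+1) = BB σ w u) = (BB σ (w + 1) (u + 0) = 0) := by
    simp only [BB, map_add, map_one, map_zero, eq_iff_iff]; grind
  have a6 : (BB σ 1 (w+u) = BB σ w u) = (BB σ (w + 1) (u + 1) = 0) := by
    simp only [BB, map_add, map_one, map_zero, eq_iff_iff]; grind
  have a7 : (BB σ 1 (w+u+1) = BB σ w u) = (BB σ (w + 1) (u + 1) = 0) := by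
    simp only [BB, map_add, map_one, map_zero, eq_iff_iff]; grind
  rw [e, Finset.card_filter, spn]
  rw [sum_insert, sum_insert, sum_insert, sum_insert, sum_insert, sum_insert, sum_insert, sum_singleton]
  · simp only [a0, a1, a2, a3, a4, a5, a6, a7]
    ring
  all_goals simp only [mem_insert, mem_singleton]
  all_goals grind

theorem cnt_main (σ : F →+* F) (h4 : #{x : F | σ x = x} = 4)
    (h16 : #{x : F | σ (σ x) = x} = 16) :
    #{p : (F × F) × F | Ind2 p.1.1 p.1.2 ∧ p.2 ∉ spn p.1.1 p.1.2 ∧ BB σ 1 p.2 = BB σ p.1.1 p.1.2} =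
      Fintype.card F ^ 2 + 8 * Fintype.card F + 96 := by
  have h2 : (2:F) = 0 := two0
  have hq : 4 ≤ Fintype.card F := by rw [← h4]; exact card_le_univ _
  have t := cnt_total σ h4 h16
  have n2 := cnt_Ind2 (F := F) hq
  have b00 := cnt_B σ h4 0 0 (by simp) (by simp)
  have b01 := cnt_B σ h4 0 1 (by simp) (by simp)
  have b10 := cnt_B σ h4 1 0 (by simp) (by simp)
  have b11 := cnt_B σ h4 1 1 (by simp) (by simp)
  rw [← Finset.sum_filter_add_sum_filter_not univ (fun p : F × F => Ind2 p.1 p.2)] at t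
  have s4 : ∑ p : F × F with ¬ Ind2 p.1 p.2, #{v : F | BB σ 1 v = BB σ p.1 p.2} =
      4 * #{p : F × F | ¬ Ind2 p.1 p.2} := by
    rw [mul_comm, ← smul_eq_mul, ← Finset.sum_const]
    apply Finset.sum_congr rfl
    rintro ⟨w, u⟩ h
    simp only [mem_filter, mem_univ, true_and] at h
    simp only [Ind2] at h
    by_cases c1 : w = 0 ∨ u = 0 ∨ u = w
    · refine cnt_v σ h4 _ 0 ?_
      simp only [BB, map_add, map_one, map_zero]
      rcases c1 with rfl | rfl | rfl <;> simp <;> grind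
    · by_cases c2 : w = 1
      · exact cnt_v σ h4 _ u (by simp only [c2])
      · refine cnt_v σ h4 _ w ?_
        have c3 : u = 1 ∨ u = w + 1 := by grind
        simp only [BB, map_add, map_one, map_zero]
        rcases c3 with rfl | rfl <;> simp <;> grind
  have s5 : ∑ p : F × F with Ind2 p.1 p.2, #{v : F | BB σ 1 v = BB σ p.1 p.2} =
      ∑ p : F × F with Ind2 p.1 p.2, #{v : F | BB σ 1 v = BB σ p.1 p.2 ∧ v ∈ spn p.1 p.2} + 
      ∑ p : F × F with Ind2 p.1 p.2, #{v : F | BB σ 1 v = BB σ p.1 p.2 ∧ ¬ v ∈ spn p.1 p.2} := by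
    rw [← Finset.sum_add_distrib]
    apply Finset.sum_congr rfl
    intro p _
    rw [← Finset.filter_filter, ← Finset.filter_filter, Finset.card_filter_add_card_filter_not]
  have s6 : ∑ p : F × F with Ind2 p.1 p.2, #{v : F | BB σ 1 v = BB σ p.1 p.2 ∧ v ∈ spn p.1 p.2} =
     2 * (#{p : F × F | Ind2 p.1 p.2 ∧ BB σ (p.1 + 0) (p.2 + 0) = 0} + 
       #{p : F × F | Ind2 p.1 p.2 ∧ BB σ (p.1 + 0) (p.2 + 1) = 0} +
       #{p : F × F | Ind2 p.1 p.2 ∧ BB σ (p.1 + 1) (p.2 + 0) = 0} +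
       #{p : F × F | Ind2 p.1 p.2 ∧ BB σ (p.1 + 1) (p.2 + 1) = 0}) := by
    rw [Finset.sum_congr rfl (fun p hp => spn_fiber σ p.1 p.2 (by simpa using hp))]
    rw [← Finset.mul_sum, Finset.sum_add_distrib, Finset.sum_add_distrib, Finset.sum_add_distrib]
    simp only [← Finset.card_filter, Finset.filter_filter]
  have s7 : #{p : (F × F) × F | Ind2 p.1.1 p.1.2 ∧ p.2 ∉ spn p.1.1 p.1.2 ∧ BB σ 1 p.2 = BB σ p.1.1 p.1.2}
     = ∑ p : F × F with Ind2 p.1 p.2, #{v : F | BB σ 1 v = BB σ p.1 p.2 ∧ ¬ v ∈ spn p.1 p.2} := by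
    rw [Finset.card_filter, Fintype.sum_prod_type, Finset.sum_filter]
    apply Finset.sum_congr rfl
    intro p _
    rw [← Finset.card_filter]
    split_ifs with h
    · congr 1; ext v; simp [h, and_comm]
    · rw [Finset.card_eq_zero]; ext v; simp [h]
  rw [s7]
  nlinarith

theorem six_sum {M : Type*} [AddCommMonoid M] (g : F → M) (a b c d : F)
    (h : [0, 1, a, b, c, d].Nodup) :
    ∑ x ∈ ({0, 1, a, b, c, d} : Finset F), g x = g 0 + (g 1 + (g a + (g b + (g c + g d)))) := by
  simp only [List.nodup_cons, List.mem_cons, not_or, List.not_mem_nil] at h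
  rw [sum_insert, sum_insert, sum_insert, sum_insert, sum_insert, sum_singleton]
  all_goals simp only [mem_insert, mem_singleton]
  all_goals grind

def TT (σ : F →+* F) : Finset (F × F × F) :=
  {p | [0, 1, p.1, p.2.1, p.2.2, 1 + p.1 + p.2.1 + p.2.2].Nodup ∧ 
    BB σ 1 (p.2.2 + 1) = BB σ (p.1 + p.2.2 + 1) (p.1 + p.2.1)}

theorem cnt_TT (σ : F →+* F) (h4 : #{x : F | σ x = x} = 4)
    (h16 : #{x : F | σ (σ x) = x} = 16) :
    #(TT σ) = Fintype.card F ^ 2 + 8 * Fintype.card F + 96 := by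
  have h2 : (2:F) = 0 := two0
  rw [← cnt_main σ h4 h16, TT]
  refine Finset.card_bij' (fun p _ => ((p.1 + p.2.2 + 1, p.1 + p.2.1), p.2.2 + 1))
    (fun p _ => (p.1.1 + p.2, p.1.2 + p.1.1 + p.2, p.2 + 1)) ?_ ?_ ?_ ?_
  · rintro ⟨a, b, c⟩ h
    simp only [mem_filter, mem_univ, true_and] at *
    obtain ⟨h, hB⟩ := h
    simp only [List.nodup_cons, List.mem_cons, not_or, List.not_mem_nil] at h
    refine ⟨?_, ?_, hB⟩
    · simp only [Ind2]; grind
    · simp only [spn, mem_insert, mem_singleton]; grind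
  · rintro ⟨⟨w, u⟩, v⟩ h
    simp only [mem_filter, mem_univ, true_and] at *
    obtain ⟨h, h', hB⟩ := h
    constructor
    · simp only [Ind2] at h
      simp only [spn, mem_insert, mem_singleton] at h'
      simp only [not_or] at h'
      obtain ⟨k1, k2, k3, k4, k5, k6⟩ := h
      obtain ⟨l1, l2, l3, l4, l5, l6, l7, l8⟩ := h'
      simp only [List.nodup_cons, List.mem_cons, not_or, List.not_mem_nil]
      and_intros <;> grind
    · have e1 : v + 1 + 1 = v := by grind
      have e2 : w + v + (v + 1) + 1 = w := by grind
      have e3 : w + v + (u + w + v) = u := by grind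
      rw [e1, e2, e3, hB]
  · rintro ⟨a, b, c⟩ h
    simp only [Prod.mk.injEq]; grind
  · rintro ⟨⟨w, u⟩, v⟩ h
    simp only [Prod.mk.injEq]; grind

def SS (σ : F →+* F) : Finset (Finset F) :=
  {S | #S = 6 ∧ 0 ∈ S ∧ 1 ∈ S ∧ ∑ x ∈ S, x = 0 ∧ ∑ x ∈ S, x * σ x = 0}

theorem cond_iff (σ : F →+* F) (a b c : F) : 
    BB σ 1 (c + 1) = BB σ (a + c + 1) (a + b) ↔
    0 * σ 0 + (1 * σ 1 + (a * σ a + (b * σ b + (c * σ c + (1 + a + b + c) * σ (1 + a + b + c))))) = 0 := by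
  have h2 : (2:F) = 0 := two0
  simp only [BB, map_add, map_one, map_zero]
  grind

theorem card_triples (R : Finset F) (hR : #R = 4) : 
    #{p : F × F × F | p.1 ∈ R ∧ p.2.1 ∈ R ∧ p.2.2 ∈ R ∧ p.1 ≠ p.2.1 ∧ p.1 ≠ p.2.2 ∧ p.2.1 ≠ p.2.2} = 24 := by
  have e := (R.equivFinOfCardEq hR).symm
  have : #{p : Fin 4 × Fin 4 × Fin 4 | p.1 ≠ p.2.1 ∧ p.1 ≠ p.2.2 ∧ p.2.1 ≠ p.2.2} = 24 := by decide
  rw [← this]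
  symm
  refine Finset.card_bij (fun p _ => ((e p.1 : F), (e p.2.1 : F), (e p.2.2 : F))) ?_ ?_ ?_
  · rintro ⟨i, j, k⟩ h
    simpa [Subtype.ext_iff] using h
  · rintro ⟨i, j, k⟩ h ⟨i', j', k'⟩ h' heq
    simpa using heq
  · rintro ⟨a, b, c⟩ h
    simp only [mem_filter, mem_univ, true_and] at h
    obtain ⟨ha, hb, hc, h⟩ := h
    refine ⟨(e.symm ⟨a, ha⟩, e.symm ⟨b, hb⟩, e.symm ⟨c, hc⟩), ?_, ?_⟩
    · simpa using h
    · simp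

theorem cnt_SS (σ : F →+* F) (h4 : #{x : F | σ x = x} = 4)
    (h16 : #{x : F | σ (σ x) = x} = 16) :
    24 * #(SS σ) = Fintype.card F ^ 2 + 8 * Fintype.card F + 96 := by
  have h2 : (2:F) = 0 := two0
  rw [← cnt_TT σ h4 h16]
  rw [Finset.card_eq_sum_card_fiberwise (s := TT σ) (t := SS σ)
    (f := fun p => ({0, 1, p.1, p.2.1, p.2.2, 1 + p.1 + p.2.1 + p.2.2} : Finset F))]
  · rw [mul_comm, ← smul_eq_mul, ← Finset.sum_const]
    apply Finset.sum_congr rfl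
    intro S hS
    simp only [SS, mem_filter, mem_univ, true_and] at hS
    obtain ⟨h6, h0, h1, hs, hf⟩ := hS
    have hR : #(S \ {0, 1}) = 4 := by
      rw [card_sdiff_of_subset, h6, card_pair zero_ne_one]
      intro x; simp; rintro (rfl | rfl) <;> assumption
    rw [← card_triples _ hR]
    congr 1
    ext ⟨a, b, c⟩
    simp only [mem_filter, mem_univ, true_and, mem_sdiff, mem_insert, mem_singleton, not_or, TT]
    constructor
    · rintro ⟨ha, hb, hc, hab, hac, hbc⟩
      have hsub : ({0, 1, a, b, c} : Finset F) ⊆ S := by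
        intro x; simp only [mem_insert, mem_singleton]; rintro (rfl | rfl | rfl | rfl | rfl) <;> grind
      have hc5 : #({0, 1, a, b, c} : Finset F) = 5 := by
        rw [card_insert_of_notMem, card_insert_of_notMem, card_insert_of_notMem,
          card_insert_of_notMem, card_singleton]
        all_goals simp only [mem_insert, mem_singleton]
        all_goals grind
      have hc1 : #(S \ {0, 1, a, b, c}) = 1 := by
        rw [card_sdiff_of_subset hsub, h6, hc5]
      obtain ⟨d, hd⟩ := card_eq_one.mp hc1
      have hdS : d ∈ S ∧ d ∉ ({0, 1, a, b, c} : Finset F) := by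
        rw [← mem_sdiff, hd]; simp
      have hS : S = {0, 1, a, b, c, d} := by
        rw [← Finset.sdiff_union_of_subset hsub, hd]
        ext x; simp only [mem_union, mem_insert, mem_singleton]; tauto
      have hnd : [0, 1, a, b, c, d].Nodup := by
        have := hdS.2
        simp only [mem_insert, mem_singleton] at this
        simp only [List.nodup_cons, List.mem_cons, not_or, List.not_mem_nil]
        grind
      rw [hS, six_sum _ _ _ _ _ hnd] at hs hf
      have hdd : d = 1 + a + b + c := by grind
      subst hdd
      exact ⟨⟨hnd, (cond_iff σ a b c).2 hf⟩, hS.symm⟩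
    · rintro ⟨⟨hnd, -⟩, rfl⟩
      simp only [List.nodup_cons, List.mem_cons, not_or, List.not_mem_nil] at hnd
      simp only [mem_insert, mem_singleton]
      grind
  · rintro ⟨a, b, c⟩ h
    simp only [TT, SS, coe_filter, mem_univ, true_and, Set.mem_ofPred_eq] at *
    obtain ⟨hnd, hB⟩ := h
    refine ⟨?_, by simp, by simp, ?_, ?_⟩
    · rw [card_eq_sum_ones, six_sum (fun _ => 1) _ _ _ _ hnd]; norm_num
    · rw [six_sum _ _ _ _ _ hnd]; grind
    · rw [six_sum _ _ _ _ _ hnd]; exact (cond_iff σ a b c).1 hB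

/-- affine invariance -/
theorem cnt_aff (σ : F →+* F) (x0 y0 : F) (h : x0 ≠ y0) :
    #{S : Finset F | #S = 6 ∧ x0 ∈ S ∧ y0 ∈ S ∧ ∑ x ∈ S, x = 0 ∧ ∑ x ∈ S, x * σ x = 0} = #(SS σ) := by
  have h2 : (2:F) = 0 := two0
  have h6 : (6:F) = 0 := by linear_combination 3 * h2
  set k := y0 - x0 with hk
  have hk0 : k ≠ 0 := sub_ne_zero.mpr h.symm
  let g : F ≃ F := 
    { toFun := fun x => k * x + x0
      invFun := fun y => (y - x0) / k
      left_inv := fun x => by simp; field_simp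
      right_inv := fun x => by field_simp; ring }
  have hg : ∀ x, g x = k * x + x0 := fun x => rfl
  have tr : ∀ S : Finset F, #S = 6 → ∑ x ∈ S, x = 0 → ∀ k' z : F, 
     ∑ x ∈ S, (k' * x + z) = 0 ∧ ∑ x ∈ S, (k' * x + z) * σ (k' * x + z) = k' * σ k' * ∑ x ∈ S, x * σ x := by
    intro S hS hs k' z
    constructor
    · rw [sum_add_distrib, ← mul_sum, hs, sum_const, hS]; simp [h6]
    · have : ∀ x, (k' * x + z) * σ (k' * x + z) = 
          k' * σ k' * (x * σ x) + k' * σ z * x + z * σ k' * σ x + z * σ z := by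
        intro x; simp only [map_add, map_mul]; ring
      simp_rw [this]
      rw [sum_add_distrib, sum_add_distrib, sum_add_distrib, ← mul_sum, ← mul_sum, ← mul_sum,
        ← map_sum, hs, sum_const, hS]
      simp [h6]
  symm
  rw [SS]
  refine Finset.card_bij' (fun S _ => S.map g.toEmbedding) (fun S _ => S.map g.symm.toEmbedding) ?_ ?_ ?_ ?_
  · intro S hS
    simp only [mem_filter, mem_univ, true_and] at *
    obtain ⟨h6, h0, h1, hs, hf⟩ := hS
    refine ⟨by simpa using h6, ?_, ?_, ?_, ?_⟩
    · rw [mem_map]; exact ⟨0, h0, by simp [hg]⟩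
    · rw [mem_map]; exact ⟨1, h1, by simp [hg, hk]⟩
    · rw [sum_map]; simp only [Equiv.toEmbedding_apply, hg]
      exact (tr S h6 hs k x0).1
    · rw [sum_map]; simp only [Equiv.toEmbedding_apply, hg]
      rw [(tr S h6 hs k x0).2, hf, mul_zero]
  · intro S hS
    simp only [mem_filter, mem_univ, true_and] at *
    obtain ⟨h6, h0, h1, hs, hf⟩ := hS
    have hgs : ∀ y, g.symm y = k⁻¹ * y + (- k⁻¹ * x0) := by
      intro y; change (y - x0) / k = _; ring
    refine ⟨by simpa using h6, ?_, ?_, ?_, ?_⟩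
    · rw [mem_map]; exact ⟨x0, h0, by simp [hgs]⟩
    · rw [mem_map]; exact ⟨y0, h1, by
        simp only [Equiv.toEmbedding_apply]; change (y0 - x0) / k = 1; rw [← hk]; field_simp⟩
    · rw [sum_map]; simp only [Equiv.toEmbedding_apply, hgs]
      exact (tr S h6 hs _ _).1
    · rw [sum_map]; simp only [Equiv.toEmbedding_apply, hgs]
      rw [(tr S h6 hs _ _).2, hf, mul_zero]
  · intro S _; ext x; simp
  · intro S _; ext x; simp

end cnt

section fin
open Classical in
theorem fix_card {F : Type*} [Field F] [Fintype F] (m k d : ℕ) (hm : 0 < m) (hF : Fintype.card F = 2 ^ m)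
    (hd : Nat.gcd m k = d) (α : F) (hα : orderOf α = 2 ^ m - 1) :
    #{x : F | x ^ (2 ^ k) = x} = 2 ^ d := by
  have hd0 : 0 < d := by rw [← hd]; exact Nat.gcd_pos_of_pos_left _ hm
  have hp : 0 < 2 ^ d - 1 := by
    have : 2 ^ 1 ≤ 2 ^ d := Nat.pow_le_pow_right (by norm_num) hd0
    omega
  have hpm : 0 < 2 ^ m - 1 := by
    have : 2 ^ 1 ≤ 2 ^ m := Nat.pow_le_pow_right (by norm_num) hm
    omega
  have hg : Nat.gcd (2 ^ m - 1) (2 ^ k - 1) = 2 ^ d - 1 := by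
    rw [Nat.pow_sub_one_gcd_pow_sub_one, hd]
  have hdvd : 2 ^ d - 1 ∣ orderOf α := by rw [hα, ← hg]; exact Nat.gcd_dvd_left _ _
  have hprim : IsPrimitiveRoot (α ^ (orderOf α / (2 ^ d - 1))) (2 ^ d - 1) := by
    rw [IsPrimitiveRoot.iff_orderOf]
    exact orderOf_pow_orderOf_div (by omega) hdvd
  have e : ({x : F | x ^ (2 ^ k) = x} : Finset F) = insert 0 (nthRootsFinset (2 ^ d - 1) (1 : F)) := by
    ext x
    simp only [mem_filter, mem_univ, true_and, mem_insert, mem_nthRootsFinset hp]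
    by_cases hx : x = 0
    · simp [hx]
    · have h1 : x ^ (2 ^ m - 1) = 1 := by rw [← hF]; exact FiniteField.pow_card_sub_one_eq_one x hx
      have h2 : x ^ (2 ^ k) = x ↔ x ^ (2 ^ k - 1) = 1 := by
        have : 2 ^ k = (2 ^ k - 1) + 1 := (Nat.sub_add_cancel Nat.one_le_two_pow).symm
        conv_lhs => rw [this, pow_succ]
        exact mul_eq_right₀ hx
      rw [h2]
      simp only [hx, false_or]
      rw [← orderOf_dvd_iff_pow_eq_one, ← orderOf_dvd_iff_pow_eq_one] at *
      rw [← hg, Nat.dvd_gcd_iff]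
      simp [h1]
  rw [e, card_insert_of_notMem, hprim.card_nthRootsFinset]
  · omega
  · rw [mem_nthRootsFinset hp, zero_pow hp.ne']; exact zero_ne_one

theorem minpoly_coprime (m e : ℕ) (hm4 : m % 4 = 0) (hm : 4 ≤ m) (hgcd : Nat.gcd m e = 2)
    (α : GaloisField 2 m) (hα : orderOf α = 2 ^ m - 1) :
    IsCoprime (minpoly (ZMod 2) α) (minpoly (ZMod 2) (α ^ (1 + 2 ^ e))) := by
  have i1 : Irreducible (minpoly (ZMod 2) α) := minpoly.irreducible (Algebra.IsIntegral.isIntegral α)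
  have i2 : Irreducible (minpoly (ZMod 2) (α ^ (1 + 2 ^ e))) :=
    minpoly.irreducible (Algebra.IsIntegral.isIntegral _)
  rw [i1.coprime_iff_not_dvd]
  intro hdv
  have hpm : 16 ≤ 2 ^ m := by
    calc 16 = 2 ^ 4 := by norm_num
      _ ≤ 2 ^ m := Nat.pow_le_pow_right (by norm_num) hm
  have h5m : 5 ∣ 2 ^ m - 1 := by
    obtain ⟨k, hk⟩ : 4 ∣ m := Nat.dvd_of_mod_eq_zero hm4
    have : 2 ^ 4 - 1 ∣ 2 ^ m - 1 := by
      rw [hk, pow_mul]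
      have := Nat.sub_dvd_pow_sub_pow (2 ^ 4) 1 k
      rwa [one_pow] at this
    exact dvd_trans (by norm_num) this
  have h5e : 5 ∣ 1 + 2 ^ e := by
    obtain ⟨k, hk⟩ : 2 ∣ e := by rw [← hgcd]; exact Nat.gcd_dvd_right _ _
    have hodd : Odd k := by
      by_contra h
      rw [Nat.not_odd_iff_even] at h
      obtain ⟨j, hj⟩ := h
      have : 4 ∣ Nat.gcd m e := Nat.dvd_gcd (Nat.dvd_of_mod_eq_zero hm4) ⟨j, by omega⟩
      rw [hgcd] at this
      omega
    rw [hk, pow_mul]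
    have := hodd.nat_add_dvd_pow_add_pow 1 (2 ^ 2)
    simpa using this
  obtain ⟨r, hr⟩ := h5m
  obtain ⟨s, hs⟩ := h5e
  have hv : (X ^ r - 1 : (ZMod 2)[X]) ∣ (X ^ r - 1 : (ZMod 2)[X]) := dvd_rfl
  have h1 : minpoly (ZMod 2) (α ^ (1 + 2 ^ e)) ∣ X ^ r - 1 := by
    apply minpoly.dvd
    have : (α ^ (1 + 2 ^ e)) ^ r = 1 := by
      rw [hs, ← pow_mul, ← orderOf_dvd_iff_pow_eq_one, hα, hr]
      exact ⟨s, by ring⟩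
    simp [this]
  have h2 : aeval α (X ^ r - 1 : (ZMod 2)[X]) = 0 := by
    obtain ⟨t, ht⟩ := dvd_trans hdv h1
    rw [ht, map_mul, minpoly.aeval, zero_mul]
  have h3 : α ^ r = 1 := by simpa [sub_eq_zero] using h2
  rw [← orderOf_dvd_iff_pow_eq_one, hα] at h3
  have := Nat.le_of_dvd (by omega) h3
  omega

theorem sum_split {M : Type*} [AddCommMonoid M] (n N : ℕ) (h : N = n + 1) (h' : n ≤ N) (g : Fin N → M)
    (hg : ∀ i : Fin N, ¬ (i : ℕ) < n → g i = 0) :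
    ∑ i : Fin n, g (Fin.castLE h' i) = ∑ i, g i := by
  subst h
  rw [Fin.sum_univ_castSucc, hg (Fin.last n) (by simp), add_zero]
  rfl

theorem aeval_codePoly {n : ℕ} {F : Type*} [Field F] [Algebra (ZMod 2) F] (c : Fin n → ZMod 2) (β : F) :
    aeval β (codePoly c) = ∑ i, algebraMap (ZMod 2) F (c i) * β ^ (i : ℕ) := by
  simp [codePoly]

/-- field element of a position -/
noncomputable def pos (m : ℕ) (α : GaloisField 2 m) (i : Fin (2 ^ m)) : GaloisField 2 m :=
  if (i : ℕ) < 2 ^ m - 1 then α ^ (i : ℕ) else 0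

theorem mem_CEbar_iff (m e : ℕ) (hm4 : m % 4 = 0) (hm : 4 ≤ m) (hgcd : Nat.gcd m e = 2)
    (α : GaloisField 2 m) (hα : orderOf α = 2 ^ m - 1) (c : Fin (2 ^ m) → ZMod 2) :
    c ∈ CEbar m e α ↔ 
      (∑ i, algebraMap (ZMod 2) (GaloisField 2 m) (c i) * pos m α i = 0 ∧ 
       ∑ i, algebraMap (ZMod 2) (GaloisField 2 m) (c i) * (pos m α i) ^ (1 + 2 ^ e) = 0) ∧ 
       ∑ i, c i = 0 := by
  have hN : 2 ^ m = (2 ^ m - 1) + 1 := (Nat.sub_add_cancel Nat.one_le_two_pow).symm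
  simp only [CEbar, CE, gE, Set.mem_ofPred_eq]
  refine and_congr ?_ Iff.rfl
  rw [← sum_split _ _ hN (Nat.sub_le _ _) (fun i => algebraMap (ZMod 2) (GaloisField 2 m) (c i) * pos m α i)
      (by intro i hi; simp [pos, hi]),
    ← sum_split _ _ hN (Nat.sub_le _ _) (fun i => algebraMap (ZMod 2) (GaloisField 2 m) (c i) * pos m α i ^ (1 + 2 ^ e))
      (by intro i hi; simp [pos, hi])]
  have hcop := minpoly_coprime m e hm4 hm hgcd α hα
  have hd : ∀ p : (ZMod 2)[X], minpoly (ZMod 2) α * minpoly (ZMod 2) (α ^ (1 + 2 ^ e)) ∣ p ↔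
      aeval α p = 0 ∧ aeval (α ^ (1 + 2 ^ e)) p = 0 := by
    intro p
    rw [← minpoly.dvd_iff, ← minpoly.dvd_iff]
    exact ⟨fun h => ⟨dvd_of_mul_right_dvd h, dvd_of_mul_left_dvd h⟩, fun h => hcop.mul_dvd h.1 h.2⟩
  rw [hd, aeval_codePoly, aeval_codePoly]
  have hp : ∀ i : Fin (2 ^ m - 1), pos m α (Fin.castLE (Nat.sub_le _ _) i) = α ^ (i : ℕ) := by
    intro i; simp [pos]
  simp only [hp, ← pow_mul, mul_comm]

theorem pos_bij (m : ℕ) (hm : 4 ≤ m)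
    (α : GaloisField 2 m) (hα : orderOf α = 2 ^ m - 1) : Function.Bijective (pos m α) := by
  have hα0 : α ≠ 0 := by
    rintro rfl
    have : 2 ^ 4 ≤ 2 ^ m := Nat.pow_le_pow_right (by norm_num) hm
    rw [orderOf_zero] at hα
    omega
  have hinj : Function.Injective (pos m α) := by
    intro i j hij
    simp only [pos] at hij
    split_ifs at hij with h1 h2 h2
    · apply Fin.ext
      exact pow_injOn_Iio_orderOf (by simpa [hα] using h1) (by simpa [hα] using h2) hij
    · exact absurd hij (pow_ne_zero _ hα0)
    · exact absurd hij.symm (pow_ne_zero _ hα0)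
    · apply Fin.ext; omega
  refine (Nat.bijective_iff_injective_and_card _).2 ⟨hinj, ?_⟩
  rw [GaloisField.card 2 m (by omega)]; simp

end fin

/-- For `m ≡ 0 (mod 4)` (with `m ≥ 4`) and `2 ≤ e ≤ ⌊m/2⌋` with
`gcd(m,e) = 2`, the supports of the weight-6 codewords of `C̄_E` form a
`2-(2^m, 6, λ)` design with `λ = (2^{2m−3} + 2^m + 12)/3`: every 2-element subset of the
coordinate positions lies in the support of exactly `λ` weight-6 codewords. -/
theorem design_weight_six
    (m e : ℕ) (hm4 : m % 4 = 0) (hm : 4 ≤ m)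
    (he2 : 2 ≤ e) (heM : 2 * e ≤ m) (hgcd : Nat.gcd m e = 2)
    (α : GaloisField 2 m) (hα : orderOf α = 2 ^ m - 1) :
    ∀ T : Finset (Fin (2 ^ m)), T.card = 2 →
      3 * {c : Fin (2 ^ m) → ZMod 2 |
        c ∈ CEbar m e α ∧ hammingNorm c = 6 ∧ ∀ i ∈ T, c i ≠ 0}.ncard =
      2 ^ (2 * m - 3) + 2 ^ m + 12 := by
  classical
  intro T hT
  obtain ⟨i0, j0, hij, rfl⟩ := card_eq_two.mp hT
  letI : Fintype (GaloisField 2 m) := Fintype.ofFinite _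
  have hF : Fintype.card (GaloisField 2 m) = 2 ^ m := by
    rw [← Nat.card_eq_fintype_card, GaloisField.card 2 m (by omega)]
  have hbij := pos_bij m hm α hα
  let P : Fin (2 ^ m) ≃ GaloisField 2 m := Equiv.ofBijective _ hbij
  have hP : ∀ i, P i = pos m α i := fun i => rfl
  let σ : GaloisField 2 m →+* GaloisField 2 m := iterateFrobenius (GaloisField 2 m) 2 e
  have hσ : ∀ x, σ x = x ^ (2 ^ e) := fun x => iterateFrobenius_def 2 e x
  have h4 : #{x : GaloisField 2 m | σ x = x} = 4 := by
    simp only [hσ]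
    have := fix_card m e 2 (by omega) hF hgcd α hα
    convert this using 1
    norm_num
  have h16 : #{x : GaloisField 2 m | σ (σ x) = x} = 16 := by
    have hg : Nat.gcd m (e + e) = 4 := by
      obtain ⟨k, hk⟩ : 4 ∣ m := Nat.dvd_of_mod_eq_zero hm4
      obtain ⟨j, hj⟩ : 2 ∣ e := by rw [← hgcd]; exact Nat.gcd_dvd_right _ _
      have h1 : Nat.gcd (2 * k) j = 1 := by
        have : Nat.gcd (2 * (2 * k)) (2 * j) = 2 := by
          rw [show 2 * (2 * k) = m by omega, show 2 * j = e by omega, hgcd]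
        rw [Nat.gcd_mul_left] at this
        omega
      have h2 : Nat.gcd k j = 1 := Nat.Coprime.coprime_dvd_left ⟨2, by ring⟩ h1
      have : Nat.gcd (4 * k) (4 * j) = 4 := by rw [Nat.gcd_mul_left, h2]
      rw [hk, show e + e = 4 * j by omega, this]
    have := fix_card m (e + e) 4 (by omega) hF hg α hα
    simp only [hσ, ← pow_mul, ← pow_add]
    convert this using 1
    norm_num
  have hcount := cnt_SS σ h4 h16
  have haff := cnt_aff σ (P i0) (P j0) (fun h => hij (P.injective h))
  rw [← haff, hF] at hcount
  let ind : Finset (GaloisField 2 m) → (Fin (2 ^ m) → ZMod 2) := fun S i => if P i ∈ S then 1 else 0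
  have hind : ∀ S i, ind S i = if P i ∈ S then 1 else 0 := fun S i => rfl
  have hinj : Function.Injective ind := by
    intro S S' h
    ext x
    have := congrFun h (P.symm x)
    simp only [hind, Equiv.apply_symm_apply] at this
    by_cases h1 : x ∈ S <;> by_cases h2 : x ∈ S' <;> simp_all
  have hsurj : Function.Surjective ind := by
    intro c
    refine ⟨({x | c (P.symm x) ≠ 0} : Finset _), ?_⟩
    funext i
    have hz : ∀ z : ZMod 2, (if z ≠ 0 then (1 : ZMod 2) else 0) = z := by decide
    simp only [hind, mem_filter, mem_univ, true_and, Equiv.symm_apply_apply]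
    exact hz (c i)
  have hcardS : ∀ S : Finset (GaloisField 2 m), #{i | P i ∈ S} = #S := by
    intro S
    rw [← Finset.card_map P.toEmbedding]
    congr 1
    ext x
    simp
  have hsum : ∀ (S : Finset (GaloisField 2 m)) (g : GaloisField 2 m → GaloisField 2 m),
      ∑ i, algebraMap (ZMod 2) (GaloisField 2 m) (ind S i) * g (P i) = ∑ x ∈ S, g x := by
    intro S g
    rw [Equiv.sum_comp P (fun x => algebraMap (ZMod 2) (GaloisField 2 m) (if x ∈ S then 1 else 0) * g x)]
    simp [apply_ite]
  have hset : {c : Fin (2 ^ m) → ZMod 2 |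
        c ∈ CEbar m e α ∧ hammingNorm c = 6 ∧ ∀ i ∈ ({i0, j0} : Finset _), c i ≠ 0} =
      ind '' ((({S : Finset (GaloisField 2 m) | #S = 6 ∧ P i0 ∈ S ∧ P j0 ∈ S ∧ ∑ x ∈ S, x = 0 ∧
        ∑ x ∈ S, x * σ x = 0} : Finset _)) : Set (Finset (GaloisField 2 m))) := by
    ext c
    obtain ⟨S, rfl⟩ := hsurj c
    rw [hinj.mem_set_image]
    simp only [Set.mem_ofPred_eq, mem_CEbar_iff m e hm4 hm hgcd α hα, coe_filter, mem_univ, true_and]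
    have e1 : hammingNorm (ind S) = #S := by
      rw [← hcardS S, hammingNorm]
      congr 1
      ext i
      simp [hind]
    have e2 : (∀ i ∈ ({i0, j0} : Finset _), ind S i ≠ 0) ↔ P i0 ∈ S ∧ P j0 ∈ S := by
      simp [hind]
    have e3 := hsum S (fun x => x)
    have e4 := hsum S (fun x => x ^ (1 + 2 ^ e))
    have e5 : ∑ i, ind S i = (#S : ZMod 2) := by
      rw [← hcardS S]; simp [hind]
    simp only [hP] at e3 e4
    have e6 : ∀ x, x * σ x = x ^ (1 + 2 ^ e) := by intro x; rw [hσ]; ring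
    rw [e1, e2, e3, e4, e5]
    simp only [e6]
    constructor
    · rintro ⟨⟨⟨a, b⟩, -⟩, h6, h0, h1⟩
      exact ⟨h6, h0, h1, a, b⟩
    · rintro ⟨h6, h0, h1, a, b⟩
      refine ⟨⟨⟨a, b⟩, ?_⟩, h6, h0, h1⟩
      rw [h6]; decide
  rw [hset, Set.ncard_image_of_injective _ hinj, Set.ncard_coe_finset]
  have hpw : (2 ^ m) ^ 2 = 8 * 2 ^ (2 * m - 3) := by
    rw [← pow_mul, show (8:ℕ) = 2 ^ 3 by norm_num, ← pow_add]; congr 1; omega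
  rw [hpw] at hcount
  omega
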